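/- arXiv:1405.4688 — 2 statements merged into one kernel-verified Lean document; each statement's English description precedes it below -/
import Mathlib

section
/- Let 0 < p ≤ 1. The map (A, B) ↦ [(p+1) ∫₀¹ (λA + (1-λ)B)^p dλ]⁻¹ is jointly convex on pairs of n×n positive definite complex matrices (in the Loewner order), and for positive real scalars s ≠ t (i.e., 1×1 matrices) its value is (t − s)/(t^{p+1} − s^{p+1}), while at s = t its value is t^{-p}/(p+1). Thus the function F(s,t) = (t−s)/(t^{p+1}−s^{p+1}) for s ≠ t, F(t,t) = t^{-p}/(p+1), extends to a jointly convex map on pairs of positive definite matrices. -/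
open Matrix MeasureTheory
open scoped ComplexOrder

attribute [local instance] Matrix.normedAddCommGroup Matrix.normedSpace

/-- Matrix power by a real exponent via the functional calculus
(unitary diagonalization for Hermitian matrices; junk value otherwise). -/
noncomputable def mpow {n : ℕ} (A : Matrix (Fin n) (Fin n) ℂ) (q : ℝ) :
    Matrix (Fin n) (Fin n) ℂ :=
  if hA : A.IsHermitian then
    (hA.eigenvectorUnitary : Matrix (Fin n) (Fin n) ℂ) *
      Matrix.diagonal (fun i => ((hA.eigenvalues i ^ q : ℝ) : ℂ)) *
      (star (hA.eigenvectorUnitary : Matrix (Fin n) (Fin n) ℂ))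
  else 0

/-- `F(A,B) = [(p+1) ∫₀¹ (λA + (1-λ)B)^p dλ]⁻¹`. -/
noncomputable def Fmap {n : ℕ} (p : ℝ) (A B : Matrix (Fin n) (Fin n) ℂ) :
    Matrix (Fin n) (Fin n) ℂ :=
  ((p + 1) • ∫ l in Set.Icc (0 : ℝ) 1, mpow (l • A + (1 - l) • B) p)⁻¹

/-!
For `0 ≤ p ≤ 1` the power `X ↦ X ^ p` is operator concave, hence so is its mean over the segment
from `B` to `A`, jointly in `(A, B)`. This mean is positive definite, and on positive definite
matrices inversion is both operator convex and operator antitone, so it turns a concave map into a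
convex one. On multiples of the identity the mean is the elementary integral of `x ^ p`.
-/

theorem convex_setOf_posDef {n 𝕜 : Type*} [RCLike 𝕜] :
    Convex ℝ {A : Matrix n n 𝕜 | A.PosDef} := by
  refine convex_iff_forall_pos.2 fun A hA B hB a b ha hb _ => ?_
  exact (hA.smul ha).add (hB.smul hb)

theorem convexOn_comp_of_mapsTo {𝕜 E F G : Type*} [Semiring 𝕜] [PartialOrder 𝕜]
    [AddCommMonoid E] [SMul 𝕜 E] [AddCommMonoid F] [PartialOrder F] [SMul 𝕜 F]
    [AddCommMonoid G] [PartialOrder G] [SMul 𝕜 G] {s : Set E} {t : Set F} {f : E → F} {g : F → G}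
    (hg : ConvexOn 𝕜 t g) (hg_anti : AntitoneOn g t) (hf : ConcaveOn 𝕜 s f)
    (hst : Set.MapsTo f s t) : ConvexOn 𝕜 s (g ∘ f) := by
  refine ⟨hf.1, fun x hx y hy a b ha hb hab => ?_⟩
  calc g (f (a • x + b • y)) ≤ g (a • f x + b • f y) :=
        hg_anti (hg.1 (hst hx) (hst hy) ha hb hab) (hst (hf.1 hx hy ha hb hab))
          (hf.2 hx hy ha hb hab)
    _ ≤ a • g (f x) + b • g (f y) := hg.2 (hst hx) (hst hy) ha hb hab

section L2OperatorNorm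

open scoped MatrixOrder Matrix.Norms.L2Operator

theorem convexOn_inv_posDef {n : Type*} [Fintype n] [DecidableEq n] :
    ConvexOn ℝ {A : Matrix n n ℂ | A.PosDef} fun A => A⁻¹ := by
  simpa only [Matrix.isStrictlyPositive_iff_posDef, Matrix.nonsing_inv_eq_ringInverse] using!
    CStarAlgebra.convexOn_ringInverse (A := Matrix n n ℂ)

theorem antitoneOn_inv_posDef {n : Type*} [Fintype n] [DecidableEq n] :
    AntitoneOn (fun A : Matrix n n ℂ => A⁻¹) {A | A.PosDef} := by
  simpa only [Matrix.isStrictlyPositive_iff_posDef, Matrix.nonsing_inv_eq_ringInverse] using!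
    CStarAlgebra.antitoneOn_ringInverse (A := Matrix n n ℂ)

variable {n : ℕ} {A : Matrix (Fin n) (Fin n) ℂ} {p : ℝ}

theorem mpow_eq_rpow (hA : A.PosSemidef) (p : ℝ) : mpow A p = A ^ p := by
  rw [CFC.rpow_eq_cfc_real hA.nonneg, hA.isHermitian.cfc_eq, mpow, dif_pos hA.isHermitian]
  rfl

theorem posDef_mpow (hA : A.PosDef) (p : ℝ) : (mpow A p).PosDef := by
  rw [mpow_eq_rpow hA.posSemidef]
  exact (hA.isStrictlyPositive.rpow A p).posDef

theorem mpow_smul_one {c : ℝ} (hc : 0 ≤ c) (p : ℝ) :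
    mpow (c • (1 : Matrix (Fin n) (Fin n) ℂ)) p = c ^ p • 1 := by
  have h_psd : (c • (1 : Matrix (Fin n) (Fin n) ℂ)).PosSemidef := PosSemidef.one.smul hc
  rw [mpow_eq_rpow h_psd, CFC.rpow_eq_cfc_real h_psd.nonneg]
  simp only [← Algebra.algebraMap_eq_smul_one, cfc_algebraMap]

theorem continuousOn_mpow (p : ℝ) :
    ContinuousOn (fun A : Matrix (Fin n) (Fin n) ℂ => mpow A p) {A | A.PosDef} := by
  have h_rpow := CFC.continuousOn_rpow (A := Matrix (Fin n) (Fin n) ℂ) p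
  simp only [Matrix.isStrictlyPositive_iff_posDef] at h_rpow
  exact h_rpow.congr fun A (hA : A.PosDef) => mpow_eq_rpow hA.posSemidef p

theorem concaveOn_mpow (hp : p ∈ Set.Icc 0 1) :
    ConcaveOn ℝ {A : Matrix (Fin n) (Fin n) ℂ | A.PosSemidef} fun A => mpow A p := by
  have h_rpow := CFC.concaveOn_rpow (A := Matrix (Fin n) (Fin n) ℂ) hp
  simp only [Set.Ici, Matrix.nonneg_iff_posSemidef] at h_rpow
  exact h_rpow.congr fun A (hA : A.PosSemidef) => (mpow_eq_rpow hA p).symm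

end L2OperatorNorm

section Integral

/-- The topology of the entrywise sup norm on matrices. It is the product topology, but Lean cannot
see this by unfolding instances only, and Bochner integrability needs the topology of the norm. -/
abbrev matrixSupNormTopology (n 𝕜 : Type*) [Fintype n] [RCLike 𝕜] :
    TopologicalSpace (Matrix n n 𝕜) :=
  PseudoMetricSpace.toUniformSpace.toTopologicalSpace

attribute [local instance] matrixSupNormTopology

open scoped MatrixOrder

section MatrixValued

variable {n α 𝕜 : Type*} [Fintype n] [RCLike 𝕜] [MeasurableSpace α] {μ : Measure α}

theorem isClosed_setOf_posSemidef : IsClosed {A : Matrix n n 𝕜 | A.PosSemidef} := by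
  simp only [posSemidef_iff_dotProduct_mulVec, Matrix.IsHermitian, Set.ofPred_and,
    Set.ofPred_forall]
  refine (isClosed_eq ?_ ?_).inter (isClosed_iInter fun x => isClosed_le ?_ ?_)
  all_goals fun_prop

instance matrixClosedIciTopology : ClosedIciTopology (Matrix n n 𝕜) where
  isClosed_Ici A := isClosed_setOf_posSemidef.preimage (continuous_sub_right A)

theorem posSemidef_integral {f : α → Matrix n n 𝕜} (hf : ∀ᵐ a ∂μ, (f a).PosSemidef) :
    (∫ a, f a ∂μ).PosSemidef :=
  (integral_nonneg_of_ae <| hf.mono fun _ h => h.nonneg).posSemidef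

theorem posDef_integral [NeZero μ] {f : α → Matrix n n 𝕜} (hf_int : Integrable f μ)
    (hf : ∀ᵐ a ∂μ, (f a).PosDef) : (∫ a, f a ∂μ).PosDef := by
  have h_psd : (∫ a, f a ∂μ).PosSemidef := posSemidef_integral (hf.mono fun _ h => h.posSemidef)
  refine .of_dotProduct_mulVec_pos h_psd.isHermitian fun x hx => ?_
  let quadForm : Matrix n n 𝕜 →L[ℝ] ℝ := RCLike.reCLM ∘L LinearMap.toContinuousLinearMap
    (dotProductBilin ℝ ℝ (star x) ∘ₗ (mulVecBilin ℝ ℝ).flip x)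
  have h_pos : ∀ᵐ a ∂μ, 0 < quadForm (f a) :=
    hf.mono fun a ha => (RCLike.pos_iff.1 (ha.dotProduct_mulVec_pos hx)).1
  have h_int : 0 < ∫ a, quadForm (f a) ∂μ := by
    rw [integral_pos_iff_support_of_nonneg_ae (h_pos.mono fun _ => le_of_lt)
      (quadForm.integrable_comp hf_int)]
    exact pos_iff_ne_zero.2 <|
      frequently_ae_mem_iff.1 (h_pos.mono fun _ h => ne_of_gt h).frequently
  rw [quadForm.integral_comp_comm hf_int] at h_int
  exact RCLike.pos_iff.2 ⟨h_int, h_psd.isHermitian.im_star_dotProduct_mulVec_self x⟩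

end MatrixValued

section SegmentMean

variable {n : ℕ} {A B : Matrix (Fin n) (Fin n) ℂ} {p : ℝ}

/-- The mean of `X ↦ X ^ p` over the segment joining `A` and `B`. `Fmap p A B` is the inverse of
`p + 1` times this mean. -/
noncomputable def segmentMean (p : ℝ) (A B : Matrix (Fin n) (Fin n) ℂ) :
    Matrix (Fin n) (Fin n) ℂ :=
  ∫ l in Set.Icc (0 : ℝ) 1, mpow (l • A + (1 - l) • B) p

theorem posDef_segment (hA : A.PosDef) (hB : B.PosDef) {l : ℝ} (hl : l ∈ Set.Icc (0 : ℝ) 1) :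
    (l • A + (1 - l) • B).PosDef :=
  convex_setOf_posDef hA hB hl.1 (sub_nonneg.2 hl.2) (add_sub_cancel l 1)

theorem integrableOn_mpow_segment (hA : A.PosDef) (hB : B.PosDef) (p : ℝ) :
    IntegrableOn (fun l : ℝ => mpow (l • A + (1 - l) • B) p) (Set.Icc 0 1) := by
  refine ContinuousOn.integrableOn_compact isCompact_Icc ?_
  refine (continuousOn_mpow p).comp (f := fun l : ℝ => l • A + (1 - l) • B) ?_ fun l hl => ?_
  · fun_prop
  · exact posDef_segment hA hB hl

theorem posDef_segmentMean (hA : A.PosDef) (hB : B.PosDef) (p : ℝ) :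
    (segmentMean p A B).PosDef := by
  have : NeZero (volume.restrict (Set.Icc (0 : ℝ) 1)) := ⟨by simp⟩
  refine posDef_integral (integrableOn_mpow_segment hA hB p) ?_
  filter_upwards [ae_restrict_mem measurableSet_Icc] with l hl
  exact posDef_mpow (posDef_segment hA hB hl) p

theorem concaveOn_mpow_segment (hp : p ∈ Set.Icc 0 1) {l : ℝ} (hl : l ∈ Set.Icc (0 : ℝ) 1) :
    ConcaveOn ℝ ({A : Matrix (Fin n) (Fin n) ℂ | A.PosDef} ×ˢ {B | B.PosDef})
      fun X => mpow (l • X.1 + (1 - l) • X.2) p := by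
  let segmentPoint : Matrix (Fin n) (Fin n) ℂ × Matrix (Fin n) (Fin n) ℂ →ₗ[ℝ]
      Matrix (Fin n) (Fin n) ℂ := l • LinearMap.fst ℝ _ _ + (1 - l) • LinearMap.snd ℝ _ _
  refine ((concaveOn_mpow hp).comp_linearMap segmentPoint).subset (fun X hX => ?_)
    (convex_setOf_posDef.prod convex_setOf_posDef)
  exact (posDef_segment hX.1 hX.2 hl).posSemidef

theorem concaveOn_segmentMean (hp : p ∈ Set.Icc 0 1) :
    ConcaveOn ℝ ({A : Matrix (Fin n) (Fin n) ℂ | A.PosDef} ×ˢ {B | B.PosDef})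
      fun X => segmentMean p X.1 X.2 := by
  refine integral_concaveOn_of_integrand_ae (convex_setOf_posDef.prod convex_setOf_posDef) ?_
    fun X hX => integrableOn_mpow_segment hX.1 hX.2 p
  filter_upwards [ae_restrict_mem measurableSet_Icc] with l hl
  exact concaveOn_mpow_segment hp hl

theorem convexOn_Fmap (hp : p ∈ Set.Icc 0 1) :
    ConvexOn ℝ ({A : Matrix (Fin n) (Fin n) ℂ | A.PosDef} ×ˢ {B | B.PosDef})
      fun X => Fmap p X.1 X.2 := by
  have hp_pos : 0 < p + 1 := by linarith [hp.1]
  exact convexOn_comp_of_mapsTo convexOn_inv_posDef antitoneOn_inv_posDef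
    ((concaveOn_segmentMean hp).smul hp_pos.le)
    fun X hX => (posDef_segmentMean hX.1 hX.2 p).smul hp_pos

end SegmentMean

end Integral

section Scalar

variable {n : ℕ} {p s t : ℝ}

theorem inv_smul_one (c : ℝ) : (c • (1 : Matrix (Fin n) (Fin n) ℂ))⁻¹ = c⁻¹ • 1 := by
  rcases eq_or_ne c 0 with rfl | hc
  · simp
  · exact Matrix.inv_eq_right_inv (by simp [smul_smul, hc])

theorem segmentMean_smul_one (p : ℝ) (hs : 0 ≤ s) (ht : 0 ≤ t) :
    segmentMean p (s • (1 : Matrix (Fin n) (Fin n) ℂ)) (t • 1) =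
      (∫ l in (0 : ℝ)..1, ((s - t) * l + t) ^ p) • 1 := by
  rw [intervalIntegral.integral_of_le zero_le_one, ← integral_Icc_eq_integral_Ioc,
    ← integral_smul_const, segmentMean]
  refine setIntegral_congr_fun measurableSet_Icc fun l hl => ?_
  have h_nonneg : 0 ≤ (s - t) * l + t := by nlinarith [hl.1, hl.2]
  rw [← mpow_smul_one h_nonneg]
  congr 1
  module

theorem Fmap_smul_one (p : ℝ) (hs : 0 ≤ s) (ht : 0 ≤ t) :
    Fmap p (s • (1 : Matrix (Fin n) (Fin n) ℂ)) (t • 1) =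
      ((p + 1) * ∫ l in (0 : ℝ)..1, ((s - t) * l + t) ^ p)⁻¹ • 1 := by
  rw [← inv_smul_one, mul_smul, ← segmentMean_smul_one p hs ht]
  rfl

theorem integral_rpow_segment (hp : p ≠ -1) (hs : 0 < s) (ht : 0 < t) (hst : s ≠ t) :
    ∫ l in (0 : ℝ)..1, ((s - t) * l + t) ^ p =
      (s ^ (p + 1) - t ^ (p + 1)) / ((p + 1) * (s - t)) := by
  have h_zero : (0 : ℝ) ∉ Set.uIcc t s := Set.notMem_uIcc_of_lt ht hs
  rw [intervalIntegral.integral_comp_mul_add (fun x : ℝ => x ^ p) (sub_ne_zero.2 hst), mul_zero,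
    zero_add, mul_one, sub_add_cancel, integral_rpow (Or.inr ⟨hp, h_zero⟩), smul_eq_mul,
    inv_mul_eq_div, div_div]

theorem Fmap_smul_one_of_ne (hp : p ≠ -1) (hs : 0 < s) (ht : 0 < t) (hst : s ≠ t) :
    Fmap p (s • (1 : Matrix (Fin n) (Fin n) ℂ)) (t • 1) =
      ((t - s) / (t ^ (p + 1) - s ^ (p + 1))) • 1 := by
  have hp_ne : p + 1 ≠ 0 := fun h => hp (eq_neg_of_add_eq_zero_left h)
  rw [Fmap_smul_one p hs.le ht.le, integral_rpow_segment hp hs ht hst, ← mul_div_assoc,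
    mul_div_mul_left _ _ hp_ne, inv_div, ← neg_sub t s, ← neg_sub (t ^ (p + 1)), neg_div_neg_eq]

theorem Fmap_smul_one_self (p : ℝ) (ht : 0 ≤ t) :
    Fmap p (t • (1 : Matrix (Fin n) (Fin n) ℂ)) (t • 1) = (t ^ (-p) / (p + 1)) • 1 := by
  rw [Fmap_smul_one p ht ht, Real.rpow_neg ht]
  simp [div_eq_mul_inv]

end Scalar

theorem stmt4 (p : ℝ) (hp0 : 0 < p) (hp1 : p ≤ 1) :
    (∀ (n : ℕ) (A₁ A₂ B₁ B₂ : Matrix (Fin n) (Fin n) ℂ),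
      A₁.PosDef → A₂.PosDef → B₁.PosDef → B₂.PosDef →
      ∀ α : ℝ, 0 ≤ α → α ≤ 1 →
      ((α • Fmap p A₁ B₁ + (1 - α) • Fmap p A₂ B₂) -
        Fmap p (α • A₁ + (1 - α) • A₂) (α • B₁ + (1 - α) • B₂)).PosSemidef) ∧
    (∀ s t : ℝ, 0 < s → 0 < t → s ≠ t →
      Fmap p (s • (1 : Matrix (Fin 1) (Fin 1) ℂ)) (t • 1) =
        ((t - s) / (t ^ (p + 1) - s ^ (p + 1))) • 1) ∧
    (∀ t : ℝ, 0 < t →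
      Fmap p (t • (1 : Matrix (Fin 1) (Fin 1) ℂ)) (t • 1) =
        (t ^ (-p) / (p + 1)) • 1) := by
  refine ⟨fun n A₁ A₂ B₁ B₂ hA₁ hA₂ hB₁ hB₂ α hα₀ hα₁ => ?_, fun s t hs ht hst => ?_,
    fun t ht => Fmap_smul_one_self p ht.le⟩
  · exact (convexOn_Fmap ⟨hp0.le, hp1⟩).2 (x := (A₁, B₁)) ⟨hA₁, hB₁⟩ (y := (A₂, B₂)) ⟨hA₂, hB₂⟩
      hα₀ (sub_nonneg.2 hα₁) (add_sub_cancel α 1)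
  · exact Fmap_smul_one_of_ne (by linarith) hs ht hst
end

section
/- Let 0 < p < 1. The map (A, B, C) ↦ (1-p) ∫₀¹ C^{1/2}(C^{-1/2}(λA + (1-λ)B)C^{-1/2})^{-p} C^{1/2} dλ is jointly convex on triples of n×n positive definite complex matrices (in the Loewner order), and for positive real scalars t₁ ≠ t₂ and t₃ > 0 (i.e., 1×1 matrices) its value is ((t₁^{1-p} − t₂^{1-p})/(t₁ − t₂))·t₃^{1+p}, while for t₁ = t₂ it is (1-p)t₁^{-p} t₃^{1+p}. Thus the function F₃(t₁,t₂,t₃) = ((t₁^{1-p}−t₂^{1-p})/(t₁−t₂))t₃^{1+p} extends to a jointly convex map on triples of positive definite matrices. -/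
open Matrix MeasureTheory
open scoped ComplexOrder

attribute [local instance] Matrix.normedAddCommGroup Matrix.normedSpace

/-- `(A,B,C) ↦ (1-p) ∫₀¹ C^{1/2} (C^{-1/2}(λA + (1-λ)B)C^{-1/2})^{-p} C^{1/2} dλ`. -/
noncomputable def G3map {n : ℕ} (p : ℝ) (A B C : Matrix (Fin n) (Fin n) ℂ) :
    Matrix (Fin n) (Fin n) ℂ :=
  (1 - p) • ∫ l in Set.Icc (0 : ℝ) 1,
    mpow C (1 / 2) *
      mpow (mpow C (-(1 / 2)) * (l • A + (1 - l) • B) * mpow C (-(1 / 2))) (-p) *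
        mpow C (1 / 2)

/-!
For `0 < p < 1`, a power `x ^ (-p)` is an integral of resolvents `t ^ (-p) • (x + t)⁻¹` against a
measure in `t`. Conjugating by `C ^ (1/2)` turns the integrand of `G3map` into an integral of
`t ^ (-p) • C (X + t C)⁻¹ C`, so everything reduces to the joint convexity of
`(V, Y) ↦ V* Y⁻¹ V`. The latter is the maximum over `W` of the maps `W* V + V* W - W* Y W`, which
are real-affine in `(V, Y)`, attained at `W = Y⁻¹ V`.
-/

open Set
open scoped Ring NNReal

lemma one_sub_mul_integral_rpow_neg {p a b : ℝ} (hp : p < 1) (hab : a ≠ b) :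
    (1 - p) * ∫ l in (0 : ℝ)..1, ((a - b) * l + b) ^ (-p) =
      (a ^ (1 - p) - b ^ (1 - p)) / (a - b) := by
  have hab' : a - b ≠ 0 := sub_ne_zero.2 hab
  have hp' : 1 - p ≠ 0 := (sub_pos.2 hp).ne'
  rw [intervalIntegral.integral_comp_mul_add (fun y ↦ y ^ (-p)) hab',
    integral_rpow (.inl (neg_lt_neg hp))]
  simp only [mul_zero, zero_add, mul_one, sub_add_cancel, smul_eq_mul, neg_add_eq_sub]
  field_simp

section CStarAlgebra

variable {A : Type*} [CStarAlgebra A] [PartialOrder A] [StarOrderedRing A]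

lemma convex_setOf_isStrictlyPositive : Convex ℝ {a : A | IsStrictlyPositive a} :=
  CStarAlgebra.convexOn_ringInverse.1

lemma star_mul_add_star_mul_sub_le (v w : A) {y : A} (hy : IsStrictlyPositive y) :
    star w * v + star v * w - star w * y * w ≤ star v * y⁻¹ʳ * v := by
  have hyy : y⁻¹ʳ * y = 1 := Ring.inverse_mul_cancel _ hy.isUnit
  have hyy' : y * y⁻¹ʳ = 1 := Ring.mul_inverse_cancel _ hy.isUnit
  have hsq : 0 ≤ star (v - y * w) * y⁻¹ʳ * (v - y * w) :=
    star_left_conjugate_nonneg hy.ringInverse.nonneg _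
  have hexpand : star (v - y * w) * y⁻¹ʳ * (v - y * w) =
      star v * y⁻¹ʳ * v - (star w * v + star v * w - star w * y * w) := by
    rw [star_sub, star_mul, hy.isSelfAdjoint.star_eq]
    calc _ = star v * y⁻¹ʳ * v - star v * (y⁻¹ʳ * y) * w - star w * (y * y⁻¹ʳ) * v
          + star w * (y * y⁻¹ʳ) * y * w := by noncomm_ring
      _ = _ := by rw [hyy, hyy']; noncomm_ring
  exact sub_nonneg.1 (hexpand ▸ hsq)

theorem convexOn_star_mul_ringInverse_mul :
    ConvexOn ℝ {x : A × A | IsStrictlyPositive x.2} fun x ↦ star x.1 * x.2⁻¹ʳ * x.1 := by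
  have hconv : Convex ℝ {x : A × A | IsStrictlyPositive x.2} :=
    (convex_setOf_isStrictlyPositive (A := A)).linear_preimage (LinearMap.snd ℝ A A)
  refine ⟨hconv, ?_⟩
  rintro ⟨v₁, y₁⟩ hy₁ ⟨v₂, y₂⟩ hy₂ a b ha hb hab
  have hy : IsStrictlyPositive (a • y₁ + b • y₂) := hconv hy₁ hy₂ ha hb hab
  set v := a • v₁ + b • v₂
  set y := a • y₁ + b • y₂
  set w := y⁻¹ʳ * v
  have hyw : y * w = v := Ring.mul_inverse_cancel_left _ _ hy.isUnit
  calc star v * y⁻¹ʳ * v = star w * v + star v * w - star w * (y * w) := by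
        rw [hyw]; simp only [w]; noncomm_ring
    _ = a • (star w * v₁ + star v₁ * w - star w * y₁ * w)
        + b • (star w * v₂ + star v₂ * w - star w * y₂ * w) := by
        simp only [v, y, star_add, star_smul, star_trivial, mul_add, add_mul, mul_smul_comm,
          smul_mul_assoc, smul_add, smul_sub, mul_assoc]
        abel
    _ ≤ a • (star v₁ * y₁⁻¹ʳ * v₁) + b • (star v₂ * y₂⁻¹ʳ * v₂) := by
        gcongr
        · exact star_mul_add_star_mul_sub_le v₁ w hy₁
        · exact star_mul_add_star_mul_sub_le v₂ w hy₂

lemma convex_setOf_isStrictlyPositive_prod :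
    Convex ℝ {x : A × A | IsStrictlyPositive x.1 ∧ IsStrictlyPositive x.2} :=
  convex_setOf_isStrictlyPositive.prod convex_setOf_isStrictlyPositive

lemma convexOn_mul_ringInverse_add_smul_mul {t : ℝ} (ht : 0 < t) :
    ConvexOn ℝ {x : A × A | IsStrictlyPositive x.1 ∧ IsStrictlyPositive x.2}
      fun x ↦ x.2 * (x.1 + t • x.2)⁻¹ʳ * x.2 := by
  let shift : A × A →ₗ[ℝ] A × A :=
    (LinearMap.snd ℝ A A).prod (LinearMap.fst ℝ A A + t • LinearMap.snd ℝ A A)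
  refine ((convexOn_star_mul_ringInverse_mul.comp_linearMap shift).subset ?_
    convex_setOf_isStrictlyPositive_prod).congr ?_
  · rintro ⟨x, c⟩ ⟨hx, hc⟩
    exact hx.add_nonneg (smul_nonneg ht.le hc.nonneg : 0 ≤ t • c)
  · rintro ⟨x, c⟩ ⟨-, hc⟩
    simp [shift, hc.isSelfAdjoint.star_eq]

lemma ringInverse_mul_cfc_rpowIntegrand₀₁ {p t : ℝ} (hp : p ∈ Ioo 0 1) (ht : 0 < t) {a : A}
    (ha : IsStrictlyPositive a) :
    a⁻¹ʳ * cfc (Real.rpowIntegrand₀₁ p t) a = t ^ (p - 1) • (a + t • 1)⁻¹ʳ := by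
  have hpos : ∀ r ∈ spectrum ℝ a, 0 < r := fun r hr ↦ ha.spectrum_pos hr
  have hadd : ∀ r ∈ spectrum ℝ a, r + t ≠ 0 := fun r hr ↦ (add_pos (hpos r hr) ht).ne'
  have hcont : ContinuousOn (Real.rpowIntegrand₀₁ p t) (spectrum ℝ a) :=
    (Real.continuousOn_rpowIntegrand₀₁_Ici hp ht).mono fun r hr ↦ (hpos r hr).le
  have hcontInv : ContinuousOn (fun r : ℝ ↦ r⁻¹) (spectrum ℝ a) :=
    continuousOn_id.inv₀ fun r hr ↦ (hpos r hr).ne'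
  have hcontRes : ContinuousOn (fun r : ℝ ↦ (r + t)⁻¹) (spectrum ℝ a) :=
    (continuousOn_id.add continuousOn_const).inv₀ hadd
  calc a⁻¹ʳ * cfc (Real.rpowIntegrand₀₁ p t) a
    _ = cfc (fun r ↦ r⁻¹) a * cfc (Real.rpowIntegrand₀₁ p t) a := by
        rw [cfc_inv (fun r : ℝ ↦ r) a (fun r hr ↦ (hpos r hr).ne'), cfc_id' ℝ a]
    _ = cfc (fun r ↦ t ^ (p - 1) * (r + t)⁻¹) a := by
        rw [← cfc_mul _ _ a hcontInv hcont]
        refine cfc_congr fun r hr ↦ ?_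
        have hr0 := hpos r hr
        simp only [Real.rpowIntegrand₀₁_eq_pow_div hp ht.le hr0.le]
        field_simp
        ring
    _ = t ^ (p - 1) • (a + t • 1)⁻¹ʳ := by
        rw [cfc_const_mul _ _ a hcontRes, cfc_inv _ a hadd, cfc_add_const t _ a, cfc_id' ℝ a,
          Algebra.algebraMap_eq_smul_one]

variable (A) in
theorem exists_measure_rpow_neg_eq_integral_ringInverse {p : ℝ} (hp : p ∈ Ioo 0 1) :
    ∃ μ : Measure ℝ, ∀ a : A, IsStrictlyPositive a →
      IntegrableOn (fun t ↦ t ^ (-p) • (a + t • 1)⁻¹ʳ) (Ioi 0) μ ∧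
      a ^ (-p) = ∫ t in Ioi 0, t ^ (-p) • (a + t • 1)⁻¹ʳ ∂μ := by
  let q : ℝ≥0 := ⟨1 - p, by grind⟩
  have hq : q ∈ Ioo 0 1 := ⟨sub_pos.2 hp.2, sub_lt_self 1 hp.1⟩
  obtain ⟨μ, hμ⟩ := CFC.exists_measure_nnrpow_eq_integral_cfcₙ_rpowIntegrand₀₁ A hq
  refine ⟨μ, fun a ha ↦ ?_⟩
  obtain ⟨hint, heq⟩ := hμ a ha.nonneg
  have hcongr : EqOn (fun t ↦ a⁻¹ʳ * cfcₙ (Real.rpowIntegrand₀₁ q t) a)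
      (fun t ↦ t ^ (-p) • (a + t • 1)⁻¹ʳ) (Ioi 0) := by
    intro t (ht : 0 < t)
    have hcont : ContinuousOn (Real.rpowIntegrand₀₁ (1 - p) t) (quasispectrum ℝ a) :=
      (Real.continuousOn_rpowIntegrand₀₁_Ici hq ht).mono fun r hr ↦
        quasispectrum_nonneg_of_nonneg a ha.nonneg r hr
    calc a⁻¹ʳ * cfcₙ (Real.rpowIntegrand₀₁ (1 - p) t) a
      _ = t ^ (1 - p - 1) • (a + t • 1)⁻¹ʳ := by
          rw [cfcₙ_eq_cfc hcont Real.rpowIntegrand₀₁_zero_right,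
            ringInverse_mul_cfc_rpowIntegrand₀₁ hq ht ha]
      _ = t ^ (-p) • (a + t • 1)⁻¹ʳ := by rw [sub_sub_cancel_left]
  refine ⟨(integrableOn_congr_fun hcongr measurableSet_Ioi).1 (hint.const_mul a⁻¹ʳ), ?_⟩
  calc a ^ (-p) = a⁻¹ʳ * a ^ q := by
        rw [CFC.inverse_eq_rpow_neg_one, CFC.nnrpow_eq_rpow hq.1, ← CFC.rpow_add ha.isUnit]
        congr 1
        change -p = -1 + (1 - p)
        ring
    _ = ∫ t in Ioi 0, a⁻¹ʳ * cfcₙ (Real.rpowIntegrand₀₁ q t) a ∂μ := by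
        rw [heq, integral_const_mul_of_integrable hint]
    _ = ∫ t in Ioi 0, t ^ (-p) • (a + t • 1)⁻¹ʳ ∂μ :=
        setIntegral_congr_fun measurableSet_Ioi hcongr

/-- The operator perspective `c ^ (1/2) * (c ^ (-1/2) * x * c ^ (-1/2)) ^ q * c ^ (1/2)` of the
power function with exponent `q`, meaningful for strictly positive `x` and `c`; it is the integrand
of `rpowDivDiff`. -/
noncomputable def rpowPerspective (q : ℝ) (x c : A) : A :=
  CFC.conjSqrt c (CFC.conjSqrt c⁻¹ʳ x ^ q)

lemma isStrictlyPositive_conjSqrt_ringInverse {x c : A} (hx : IsStrictlyPositive x)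
    (hc : IsStrictlyPositive c) : IsStrictlyPositive (CFC.conjSqrt c⁻¹ʳ x) :=
  (CFC.isStrictlyPositive_conjSqrt_iff _ _ hc.ringInverse).2 hx

lemma conjSqrt_ringInverse_eq_mul_ringInverse_mul {c : A} (y : A) (hc : IsStrictlyPositive c) :
    CFC.conjSqrt c (CFC.conjSqrt c⁻¹ʳ y)⁻¹ʳ = c * y⁻¹ʳ * c := by
  rw [CFC.ringInverse_conjSqrt _ _ hc.ringInverse, Ring.inverse_inverse hc.isUnit,
    CFC.conjSqrt_apply, CFC.conjSqrt_apply]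
  have hsqrt : CFC.sqrt c * CFC.sqrt c = c := CFC.sqrt_mul_sqrt_self c hc.nonneg
  calc _ = (CFC.sqrt c * CFC.sqrt c) * y⁻¹ʳ * (CFC.sqrt c * CFC.sqrt c) := by noncomm_ring
    _ = _ := by rw [hsqrt]

variable (A) in
theorem exists_measure_rpowPerspective_neg_eq_integral {p : ℝ} (hp : p ∈ Ioo 0 1) :
    ∃ μ : Measure ℝ, ∀ x c : A, IsStrictlyPositive x → IsStrictlyPositive c →
      IntegrableOn (fun t ↦ t ^ (-p) • (c * (x + t • c)⁻¹ʳ * c)) (Ioi 0) μ ∧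
      rpowPerspective (-p) x c = ∫ t in Ioi 0, t ^ (-p) • (c * (x + t • c)⁻¹ʳ * c) ∂μ := by
  obtain ⟨μ, hμ⟩ := exists_measure_rpow_neg_eq_integral_ringInverse A hp
  refine ⟨μ, fun x c hx hc ↦ ?_⟩
  obtain ⟨hint, heq⟩ := hμ _ (isStrictlyPositive_conjSqrt_ringInverse hx hc)
  have hres (t : ℝ) : CFC.conjSqrt c (t ^ (-p) • (CFC.conjSqrt c⁻¹ʳ x + t • 1)⁻¹ʳ) =
      t ^ (-p) • (c * (x + t • c)⁻¹ʳ * c) := by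
    rw [map_smul (CFC.conjSqrt c), ← CFC.conjSqrt_ringInverse_self c hc,
      ← map_smul (CFC.conjSqrt c⁻¹ʳ), ← map_add, conjSqrt_ringInverse_eq_mul_ringInverse_mul _ hc]
  simp only [← hres]
  exact ⟨(CFC.conjSqrt c).integrable_comp hint,
    by rw [rpowPerspective, heq, ContinuousLinearMap.integral_comp_comm _ hint]⟩

theorem convexOn_rpowPerspective_neg {p : ℝ} (hp : p ∈ Ioo 0 1) :
    ConvexOn ℝ {x : A × A | IsStrictlyPositive x.1 ∧ IsStrictlyPositive x.2}
      fun x ↦ rpowPerspective (-p) x.1 x.2 := by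
  obtain ⟨μ, hμ⟩ := exists_measure_rpowPerspective_neg_eq_integral A hp
  have hint : ∀ x ∈ {x : A × A | IsStrictlyPositive x.1 ∧ IsStrictlyPositive x.2},
      IntegrableOn (fun t ↦ t ^ (-p) • (x.2 * (x.1 + t • x.2)⁻¹ʳ * x.2)) (Ioi 0) μ :=
    fun x hx ↦ (hμ x.1 x.2 hx.1 hx.2).1
  refine (integral_convexOn_of_integrand_ae convex_setOf_isStrictlyPositive_prod ?_ hint).congr
    fun x hx ↦ (hμ x.1 x.2 hx.1 hx.2).2.symm
  filter_upwards [ae_restrict_mem measurableSet_Ioi] with t (ht : 0 < t)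
  exact (convexOn_mul_ringInverse_add_smul_mul ht).smul (Real.rpow_nonneg ht.le _)

lemma isStrictlyPositive_smul_add_one_sub_smul {a b : A} (ha : IsStrictlyPositive a)
    (hb : IsStrictlyPositive b) {l : ℝ} (hl : l ∈ Icc 0 1) :
    IsStrictlyPositive (l • a + (1 - l) • b) :=
  convex_setOf_isStrictlyPositive ha hb hl.1 (sub_nonneg.2 hl.2) (add_sub_cancel ..)

lemma continuousOn_rpowPerspective_left (q : ℝ) {c : A} (hc : IsStrictlyPositive c) :
    ContinuousOn (fun x ↦ rpowPerspective q x c) {x | IsStrictlyPositive x} :=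
  (CFC.conjSqrt c).continuous.comp_continuousOn <|
    (CFC.continuousOn_rpow q).comp (CFC.conjSqrt c⁻¹ʳ).continuous.continuousOn fun _ hx ↦
      isStrictlyPositive_conjSqrt_ringInverse hx hc

lemma integrableOn_Icc_rpowPerspective (q : ℝ) {a b c : A} (ha : IsStrictlyPositive a)
    (hb : IsStrictlyPositive b) (hc : IsStrictlyPositive c) :
    IntegrableOn (fun l : ℝ ↦ rpowPerspective q (l • a + (1 - l) • b) c) (Icc 0 1) :=
  ContinuousOn.integrableOn_Icc <| (continuousOn_rpowPerspective_left q hc).comp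
    (by fun_prop) fun _ hl ↦ isStrictlyPositive_smul_add_one_sub_smul ha hb hl

/-- The operator extension of `(a, b, c) ↦ (a ^ (1 - p) - b ^ (1 - p)) / (a - b) * c ^ (1 + p)`. The
divided difference is encoded as the average of the derivative `(1 - p) * x ^ (-p)` over the segment
from `b` to `a`, which also covers `a = b`. -/
noncomputable def rpowDivDiff (p : ℝ) (a b c : A) : A :=
  (1 - p) • ∫ l in Icc (0 : ℝ) 1, rpowPerspective (-p) (l • a + (1 - l) • b) c

theorem convexOn_rpowDivDiff {p : ℝ} (hp : p ∈ Ioo 0 1) :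
    ConvexOn ℝ {x : A × A × A |
        IsStrictlyPositive x.1 ∧ IsStrictlyPositive x.2.1 ∧ IsStrictlyPositive x.2.2}
      fun x ↦ rpowDivDiff p x.1 x.2.1 x.2.2 := by
  have hconv : Convex ℝ {x : A × A × A |
      IsStrictlyPositive x.1 ∧ IsStrictlyPositive x.2.1 ∧ IsStrictlyPositive x.2.2} :=
    convex_setOf_isStrictlyPositive.prod convex_setOf_isStrictlyPositive_prod
  refine (integral_convexOn_of_integrand_ae hconv ?_ fun x hx ↦
    integrableOn_Icc_rpowPerspective (-p) hx.1 hx.2.1 hx.2.2).smul (sub_nonneg.2 hp.2.le)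
  filter_upwards [ae_restrict_mem measurableSet_Icc] with l hl
  let segment : A × A × A →ₗ[ℝ] A × A :=
    (l • LinearMap.fst ℝ A (A × A) +
      (1 - l) • LinearMap.fst ℝ A A ∘ₗ LinearMap.snd ℝ A (A × A)).prod
      (LinearMap.snd ℝ A A ∘ₗ LinearMap.snd ℝ A (A × A))
  refine ((convexOn_rpowPerspective_neg hp).comp_linearMap segment).subset ?_ hconv
  exact fun x hx ↦ ⟨isStrictlyPositive_smul_add_one_sub_smul hx.1 hx.2.1 hl, hx.2.2⟩

lemma smul_one_rpow {x : ℝ} (hx : 0 ≤ x) (q : ℝ) : (x • 1 : A) ^ q = x ^ q • 1 := by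
  lift x to ℝ≥0 using hx
  simpa only [Algebra.algebraMap_eq_smul_one, NNReal.smul_def, NNReal.coe_rpow] using
    CFC.rpow_algebraMap (A := A) (x := x) (y := q)

lemma conjSqrt_smul_one_smul_one {c : ℝ} (hc : 0 ≤ c) (x : ℝ) :
    CFC.conjSqrt (c • 1 : A) (x • 1) = (c * x) • 1 := by
  rw [map_smul, CFC.conjSqrt_one _ (smul_nonneg hc zero_le_one), smul_smul, mul_comm]

lemma rpowPerspective_smul_one_smul_one (q : ℝ) {x c : ℝ} (hx : 0 ≤ x) (hc : 0 < c) :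
    rpowPerspective q (x • 1 : A) (c • 1) = (x ^ q * c ^ (1 - q)) • 1 := by
  have hinv : (c • 1 : A)⁻¹ʳ = c⁻¹ • 1 := by
    rw [CFC.inverse_eq_rpow_neg_one (isStrictlyPositive_one.smul hc), smul_one_rpow hc.le,
      Real.rpow_neg_one]
  rw [rpowPerspective, hinv, conjSqrt_smul_one_smul_one (inv_nonneg.2 hc.le),
    smul_one_rpow (by positivity), conjSqrt_smul_one_smul_one hc.le,
    Real.mul_rpow (by positivity) hx, Real.inv_rpow hc.le, Real.rpow_sub hc, Real.rpow_one]
  congr 1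
  ring

lemma rpowDivDiff_smul_one_smul_one_smul_one (p : ℝ) {a b c : ℝ} (ha : 0 < a) (hb : 0 < b)
    (hc : 0 < c) :
    rpowDivDiff p (a • 1 : A) (b • 1) (c • 1) =
      ((1 - p) * (∫ l in (0 : ℝ)..1, ((a - b) * l + b) ^ (-p)) * c ^ (1 + p)) • 1 := by
  have hscalar : EqOn (fun l : ℝ ↦ rpowPerspective (-p) (l • a • 1 + (1 - l) • b • (1 : A)) (c • 1))
      (fun l ↦ (((a - b) * l + b) ^ (-p) * c ^ (1 + p)) • 1) (Icc 0 1) := by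
    intro l hl
    have hcomb : l • a • 1 + (1 - l) • b • (1 : A) = ((a - b) * l + b) • 1 := by module
    have hpos : 0 ≤ (a - b) * l + b := by nlinarith [hl.1, hl.2]
    simp only [hcomb, rpowPerspective_smul_one_smul_one (-p) hpos hc, sub_neg_eq_add]
  rw [rpowDivDiff, setIntegral_congr_fun measurableSet_Icc hscalar, integral_smul_const,
    integral_mul_const, integral_Icc_eq_integral_Ioc,
    ← intervalIntegral.integral_of_le zero_le_one, smul_smul, mul_assoc]

theorem stmt13_general {p : ℝ} (hp : p ∈ Ioo 0 1) :
    ConvexOn ℝ {x : A × A × A |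
        IsStrictlyPositive x.1 ∧ IsStrictlyPositive x.2.1 ∧ IsStrictlyPositive x.2.2}
      (fun x ↦ rpowDivDiff p x.1 x.2.1 x.2.2) ∧
    (∀ a b c : ℝ, 0 < a → 0 < b → 0 < c → a ≠ b →
      rpowDivDiff p (a • 1 : A) (b • 1) (c • 1) =
        ((a ^ (1 - p) - b ^ (1 - p)) / (a - b) * c ^ (1 + p)) • 1) ∧
    ∀ a c : ℝ, 0 < a → 0 < c →
      rpowDivDiff p (a • 1 : A) (a • 1) (c • 1) = ((1 - p) * a ^ (-p) * c ^ (1 + p)) • 1 := by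
  refine ⟨convexOn_rpowDivDiff hp, fun a b c ha hb hc hab ↦ ?_, fun a c ha hc ↦ ?_⟩
  · rw [rpowDivDiff_smul_one_smul_one_smul_one p ha hb hc,
      one_sub_mul_integral_rpow_neg hp.2 hab]
  · simp [rpowDivDiff_smul_one_smul_one_smul_one p ha ha hc]

end CStarAlgebra

section Matrix

variable {n : ℕ}

open scoped MatrixOrder Matrix.Norms.L2Operator

lemma mpow_eq_rpow_s13 {M : Matrix (Fin n) (Fin n) ℂ} (hM : M.PosSemidef) (q : ℝ) :
    mpow M q = M ^ q := by
  rw [CFC.rpow_eq_cfc_real hM.nonneg, hM.isHermitian.cfc_eq]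
  simp only [mpow, dif_pos hM.isHermitian, Matrix.IsHermitian.cfc, Complex.coe_algebraMap,
    Unitary.conjStarAlgAut_apply]
  rfl

lemma mpow_half {C : Matrix (Fin n) (Fin n) ℂ} (hC : C.PosDef) : mpow C (1 / 2) = CFC.sqrt C := by
  rw [mpow_eq_rpow_s13 hC.posSemidef, CFC.sqrt_eq_rpow]

lemma mpow_neg_half {C : Matrix (Fin n) (Fin n) ℂ} (hC : C.PosDef) :
    mpow C (-(1 / 2)) = CFC.sqrt C⁻¹ʳ := by
  rw [mpow_eq_rpow_s13 hC.posSemidef, CFC.sqrt_ringInverse, CFC.sqrt_eq_rpow,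
    CFC.inverse_rpow _ _ (by norm_num) hC.isStrictlyPositive]

lemma mpow_perspective_eq_rpowPerspective (q : ℝ) {X C : Matrix (Fin n) (Fin n) ℂ} (hX : X.PosDef)
    (hC : C.PosDef) :
    mpow C (1 / 2) * mpow (mpow C (-(1 / 2)) * X * mpow C (-(1 / 2))) q * mpow C (1 / 2) =
      rpowPerspective q X C := by
  have hconj : (CFC.conjSqrt C⁻¹ʳ X).PosSemidef := nonneg_iff_posSemidef.1
    (isStrictlyPositive_conjSqrt_ringInverse hX.isStrictlyPositive hC.isStrictlyPositive).nonneg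
  rw [mpow_half hC, mpow_neg_half hC, ← CFC.conjSqrt_apply (c := C⁻¹ʳ), mpow_eq_rpow_s13 hconj,
    ← CFC.conjSqrt_apply, rpowPerspective]

lemma integral_supNorm_eq_integral_l2OpNorm {α : Type*} [MeasurableSpace α] (μ : Measure α)
    (f : α → Matrix (Fin n) (Fin n) ℂ) :
    @integral _ _ Matrix.normedAddCommGroup Matrix.normedSpace _ μ f = ∫ x, f x ∂μ :=
  -- Both norms induce the product topology, so the identity is a continuous linear equivalence.
  @ContinuousLinearEquiv.integral_comp_comm _ (Matrix (Fin n) (Fin n) ℂ)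
    (Matrix (Fin n) (Fin n) ℂ) _ μ ℝ _ _ _ Matrix.normedAddCommGroup Matrix.normedSpace
    Matrix.normedSpace _ (ContinuousLinearEquiv.refl ℝ _) f

lemma G3map_eq_rpowDivDiff (p : ℝ) {A B C : Matrix (Fin n) (Fin n) ℂ} (hA : A.PosDef)
    (hB : B.PosDef) (hC : C.PosDef) : G3map p A B C = rpowDivDiff p A B C := by
  rw [G3map, integral_supNorm_eq_integral_l2OpNorm, rpowDivDiff]
  congr 1
  refine setIntegral_congr_fun measurableSet_Icc fun l hl ↦ ?_
  exact mpow_perspective_eq_rpowPerspective (-p) (isStrictlyPositive_smul_add_one_sub_smul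
    hA.isStrictlyPositive hB.isStrictlyPositive hl).posDef hC

theorem convexOn_G3map {p : ℝ} (hp : p ∈ Ioo 0 1) :
    ConvexOn ℝ {x : Matrix (Fin n) (Fin n) ℂ × Matrix (Fin n) (Fin n) ℂ × Matrix (Fin n) (Fin n) ℂ |
        x.1.PosDef ∧ x.2.1.PosDef ∧ x.2.2.PosDef}
      fun x ↦ G3map p x.1 x.2.1 x.2.2 := by
  simp only [← isStrictlyPositive_iff_posDef]
  exact (stmt13_general hp).1.congr fun x hx ↦
    (G3map_eq_rpowDivDiff p hx.1.posDef hx.2.1.posDef hx.2.2.posDef).symm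

lemma posDef_smul_one {t : ℝ} (ht : 0 < t) : (t • (1 : Matrix (Fin n) (Fin n) ℂ)).PosDef :=
  Matrix.PosDef.one.smul ht

theorem G3map_smul_one_of_ne {p : ℝ} (hp : p ∈ Ioo 0 1) {a b c : ℝ} (ha : 0 < a) (hb : 0 < b)
    (hc : 0 < c) (hab : a ≠ b) :
    G3map p (a • (1 : Matrix (Fin n) (Fin n) ℂ)) (b • 1) (c • 1) =
      ((a ^ (1 - p) - b ^ (1 - p)) / (a - b) * c ^ (1 + p)) • 1 := by
  rw [G3map_eq_rpowDivDiff p (posDef_smul_one ha) (posDef_smul_one hb) (posDef_smul_one hc)]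
  exact (stmt13_general hp).2.1 a b c ha hb hc hab

theorem G3map_smul_one_self {p : ℝ} (hp : p ∈ Ioo 0 1) {a c : ℝ} (ha : 0 < a) (hc : 0 < c) :
    G3map p (a • (1 : Matrix (Fin n) (Fin n) ℂ)) (a • 1) (c • 1) =
      ((1 - p) * a ^ (-p) * c ^ (1 + p)) • 1 := by
  rw [G3map_eq_rpowDivDiff p (posDef_smul_one ha) (posDef_smul_one ha) (posDef_smul_one hc)]
  exact (stmt13_general hp).2.2 a c ha hc

end Matrix

theorem stmt13 (p : ℝ) (hp0 : 0 < p) (hp1 : p < 1) :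
    (∀ (n : ℕ) (A₁ B₁ C₁ A₂ B₂ C₂ : Matrix (Fin n) (Fin n) ℂ),
      A₁.PosDef → B₁.PosDef → C₁.PosDef → A₂.PosDef → B₂.PosDef → C₂.PosDef →
      ∀ α : ℝ, 0 ≤ α → α ≤ 1 →
      ((α • G3map p A₁ B₁ C₁ + (1 - α) • G3map p A₂ B₂ C₂) -
        G3map p (α • A₁ + (1 - α) • A₂) (α • B₁ + (1 - α) • B₂)
          (α • C₁ + (1 - α) • C₂)).PosSemidef) ∧
    (∀ t₁ t₂ t₃ : ℝ, 0 < t₁ → 0 < t₂ → 0 < t₃ → t₁ ≠ t₂ →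
      G3map p (t₁ • (1 : Matrix (Fin 1) (Fin 1) ℂ)) (t₂ • 1) (t₃ • 1) =
        ((t₁ ^ (1 - p) - t₂ ^ (1 - p)) / (t₁ - t₂) * t₃ ^ (1 + p)) • 1) ∧
    (∀ t₁ t₃ : ℝ, 0 < t₁ → 0 < t₃ →
      G3map p (t₁ • (1 : Matrix (Fin 1) (Fin 1) ℂ)) (t₁ • 1) (t₃ • 1) =
        ((1 - p) * t₁ ^ (-p) * t₃ ^ (1 + p)) • 1) := by
  have hp : p ∈ Ioo 0 1 := ⟨hp0, hp1⟩
  refine ⟨fun n A₁ B₁ C₁ A₂ B₂ C₂ hA₁ hB₁ hC₁ hA₂ hB₂ hC₂ α hα₀ hα₁ ↦ ?_,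
    fun t₁ t₂ t₃ h₁ h₂ h₃ hne ↦ G3map_smul_one_of_ne hp h₁ h₂ h₃ hne,
    fun t₁ t₃ h₁ h₃ ↦ G3map_smul_one_self hp h₁ h₃⟩
  exact Matrix.le_iff.1 <| (convexOn_G3map hp).2 (x := (A₁, B₁, C₁)) (y := (A₂, B₂, C₂))
    ⟨hA₁, hB₁, hC₁⟩ ⟨hA₂, hB₂, hC₂⟩ hα₀ (sub_nonneg.2 hα₁) (add_sub_cancel ..)
end
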